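/- Let μ, ψ, ρ, p_t, p_m, T > 0 with T > μ·(ρ/p_t)^(1/3), set q_t* = (p_t/ρ)^(1/3) and q_m* = ψ/(T − μ·(ρ/p_t)^(1/3)), and assume p_m ≥ ρ·(q_m*)³. Then among all q_m > 0 satisfying the constraints μ/q_t* + ψ/q_m ≤ T and (ψ/q_m)·p_m − ρ·ψ·q_m² ≥ 0, the client utility U(q_t*, q_m) = (μ/q_t*)·p_t + (ψ/q_m)·p_m − ρ·μ·(q_t*)² − ρ·ψ·q_m² is (uniquely) maximized at q_m = q_m*. -/

import Mathlib

/-- Maximality content of Theorem 1 along the slice where the training constraint binds: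
among all `q_m > 0` satisfying the time and mining-payoff constraints, the utility
`U(q_t*, q_m)` is uniquely maximized at `q_m = q_m*`. -/
theorem stmt_6 (μ ψ ρ pt pm T : ℝ) (hμ : 0 < μ) (hψ : 0 < ψ) (hρ : 0 < ρ) (hpt : 0 < pt)
    (hpm : 0 < pm) (hT : 0 < T) (hTμ : μ * (ρ / pt) ^ ((1 : ℝ) / 3) < T)
    (qt qm : ℝ) (hqt : qt = (pt / ρ) ^ ((1 : ℝ) / 3))
    (hqm : qm = ψ / (T - μ * (ρ / pt) ^ ((1 : ℝ) / 3)))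
    (hpm' : pm ≥ ρ * qm ^ 3)
    (U : ℝ → ℝ → ℝ)
    (hU : ∀ x y, U x y = (μ / x) * pt + (ψ / y) * pm - ρ * μ * x ^ 2 - ρ * ψ * y ^ 2) :
    (0 < qm ∧ μ / qt + ψ / qm ≤ T ∧ (ψ / qm) * pm - ρ * ψ * qm ^ 2 ≥ 0) ∧
    (∀ q : ℝ, 0 < q → μ / qt + ψ / q ≤ T → (ψ / q) * pm - ρ * ψ * q ^ 2 ≥ 0 →
      U qt q ≤ U qt qm) ∧
    (∀ q : ℝ, 0 < q → μ / qt + ψ / q ≤ T → (ψ / q) * pm - ρ * ψ * q ^ 2 ≥ 0 →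
      q ≠ qm → U qt q < U qt qm) := by
  have h1 : μ / qt = μ * (ρ / pt) ^ ((1 : ℝ) / 3) := by
    have h2 : ρ / pt = (pt / ρ)⁻¹ := (inv_div pt ρ).symm
    rw [hqt, h2, Real.inv_rpow (by positivity), div_eq_mul_inv]
  rw [← h1] at hTμ hqm
  have hd : 0 < T - μ / qt := by linarith
  have hq0 : 0 < qm := by rw [hqm]; positivity
  have hψq : ψ / qm = T - μ / qt := by
    rw [hqm]; field_simp
  have strict : ∀ q : ℝ, 0 < q → μ / qt + ψ / q ≤ T → q ≠ qm → U qt q < U qt qm := by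
    intro q hq hc hne
    have h3 : ψ / q ≤ ψ / qm := by linarith
    have h4 : qm ≤ q := (div_le_div_iff_of_pos_left hψ hq hq0).1 h3
    have h5 : qm < q := lt_of_le_of_ne h4 (Ne.symm hne)
    have h6 : ψ / q * pm ≤ ψ / qm * pm := mul_le_mul_of_nonneg_right h3 hpm.le
    have h7 : qm ^ 2 < q ^ 2 := by nlinarith
    have h8 : ρ * ψ * qm ^ 2 < ρ * ψ * q ^ 2 := mul_lt_mul_of_pos_left h7 (mul_pos hρ hψ)
    rw [hU, hU]
    linarith
  refine ⟨⟨hq0, by linarith, ?_⟩, ?_, fun q hq hc _ hne => strict q hq hc hne⟩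
  · have h9 : ψ / qm * pm - ρ * ψ * qm ^ 2 = ψ / qm * (pm - ρ * qm ^ 3) := by
      field_simp
    rw [h9]
    exact mul_nonneg (by positivity) (by linarith)
  · intro q hq hc _
    by_cases hne : q = qm
    · rw [hne]
    · exact (strict q hq hc hne).le
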